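/- arXiv:2105.12500 — 2 statements merged into one kernel-verified Lean document; each statement's English description precedes it below -/
import Mathlib

section
/- Let X be a real-valued random variable taking values almost surely in the interval [m, M] and satisfying P(X = m) > 0. Then for c ∈ [m, M], the equality E[X · 1_{X ≤ c}] = c · P(X ≤ c) holds if and only if c = m. -/
open MeasureTheory

/-!
On the event `{X ≤ c}` the nonnegative variable `c - X` has integral zero exactly when it vanishes
almost everywhere there, that is, when `c ≤ X` almost everywhere. For `m ≤ c`, with `m` the greatest
almost-everywhere lower bound of `X`, this says `c = m`.
-/

section

variable {Ω : Type*} [MeasurableSpace Ω] {μ : Measure Ω}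

theorem setIntegral_eq_const_mul_measureReal_iff_of_ae_le {s : Set Ω} {f : Ω → ℝ} {c : ℝ}
    (hs : μ s ≠ ⊤) (hf : IntegrableOn f s μ) (hle : ∀ᵐ ω ∂μ.restrict s, f ω ≤ c) :
    ∫ ω in s, f ω ∂μ = c * μ.real s ↔ ∀ᵐ ω ∂μ.restrict s, f ω = c := by
  have hconst : ∫ _ in s, c ∂μ = c * μ.real s := by
    rw [setIntegral_const, smul_eq_mul, mul_comm]
  rw [← hconst]
  exact integral_eq_iff_of_ae_le hf (integrableOn_const hs) hle

theorem ae_restrict_sublevel_eq_iff_ae_ge {α : Type*} [LinearOrder α] {X : Ω → α} {c : α}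
    (hs : NullMeasurableSet {ω | X ω ≤ c} μ) :
    (∀ᵐ ω ∂μ.restrict {ω | X ω ≤ c}, X ω = c) ↔ ∀ᵐ ω ∂μ, c ≤ X ω := by
  rw [ae_restrict_iff'₀ hs]
  refine Filter.eventually_congr (.of_forall fun ω ↦ ?_)
  exact ⟨fun h ↦ (le_total c (X ω)).elim id fun hle ↦ (h hle).ge, fun hge hle ↦ hle.antisymm hge⟩

theorem setIntegral_sublevel_eq_const_mul_measureReal_iff {X : Ω → ℝ} {c : ℝ}
    (hs : NullMeasurableSet {ω | X ω ≤ c} μ) (hfin : μ {ω | X ω ≤ c} ≠ ⊤)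
    (hint : IntegrableOn X {ω | X ω ≤ c} μ) :
    ∫ ω in {ω | X ω ≤ c}, X ω ∂μ = c * μ.real {ω | X ω ≤ c} ↔ ∀ᵐ ω ∂μ, c ≤ X ω :=
  (setIntegral_eq_const_mul_measureReal_iff_of_ae_le hfin hint (ae_restrict_mem₀ hs)).trans
    (ae_restrict_sublevel_eq_iff_ae_ge hs)

theorem integrableOn_sublevel_of_ae_ge {X : Ω → ℝ} {m c : ℝ} (hX : AEMeasurable X μ)
    (hm : ∀ᵐ ω ∂μ, m ≤ X ω) (hfin : μ {ω | X ω ≤ c} ≠ ⊤) :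
    IntegrableOn X {ω | X ω ≤ c} μ := by
  have hle : ∀ᵐ ω ∂μ.restrict {ω | X ω ≤ c}, X ω ≤ c :=
    ae_restrict_mem₀ (nullMeasurableSet_le hX aemeasurable_const)
  have : IsFiniteMeasure (μ.restrict {ω | X ω ≤ c}) := isFiniteMeasure_restrict.2 hfin
  exact Integrable.of_mem_Icc m c hX.restrict ((ae_restrict_of_ae hm).and hle)

theorem isGreatest_ae_lowerBound_of_frequently_eq {α : Type*} [Preorder α] {X : Ω → α} {m : α}
    (hm : ∀ᵐ ω ∂μ, m ≤ X ω) (hatom : ∃ᵐ ω ∂μ, X ω = m) :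
    IsGreatest {b | ∀ᵐ ω ∂μ, b ≤ X ω} m := by
  refine ⟨hm, fun b hb ↦ ?_⟩
  obtain ⟨ω, hω, hbω⟩ := (hatom.and_eventually hb).exists
  exact hbω.trans_eq hω

theorem truncated_mean_eq_iff_general {X : Ω → ℝ} {m c : ℝ} (hX : AEMeasurable X μ)
    (hm : IsGreatest {b | ∀ᵐ ω ∂μ, b ≤ X ω} m) (hfin : μ {ω | X ω ≤ c} ≠ ⊤) (hmc : m ≤ c) :
    ∫ ω in {ω | X ω ≤ c}, X ω ∂μ = c * μ.real {ω | X ω ≤ c} ↔ c = m := by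
  have hs : NullMeasurableSet {ω | X ω ≤ c} μ := nullMeasurableSet_le hX aemeasurable_const
  rw [setIntegral_sublevel_eq_const_mul_measureReal_iff hs hfin
    (integrableOn_sublevel_of_ae_ge hX hm.1 hfin)]
  constructor
  · intro hc
    exact (hm.2 hc).antisymm hmc
  · rintro rfl
    exact hm.1

end

/-- The unique self-consistent quiet response (Theorem 1): if `X ∈ [m, M]` a.s.
with `P(X = m) > 0`, then for `c ∈ [m, M]` one has
`E[X · 1_{X ≤ c}] = c · P(X ≤ c)` if and only if `c = m`. -/
theorem truncated_mean_eq_iff {Ω : Type*} [MeasurableSpace Ω]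
    (μ : Measure Ω) [IsProbabilityMeasure μ]
    (X : Ω → ℝ) (hXmeas : Measurable X) (hXint : Integrable X μ)
    (m M : ℝ) (hbound : ∀ᵐ ω ∂μ, X ω ∈ Set.Icc m M)
    (hatom : 0 < μ {ω | X ω = m})
    (c : ℝ) (hc : c ∈ Set.Icc m M) :
    (∫ ω in {ω | X ω ≤ c}, X ω ∂μ = c * (μ {ω | X ω ≤ c}).toReal) ↔ c = m :=
  truncated_mean_eq_iff_general hXmeas.aemeasurable
    (isGreatest_ae_lowerBound_of_frequently_eq (hbound.mono fun _ h ↦ h.1)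
      (frequently_ae_iff.2 hatom.ne')) (measure_ne_top μ _) hc.1
end

section
/- Let X be a real-valued random variable taking values almost surely in [m, M] with P(X = m) > 0, let R be a measurable set of real numbers (the set of realizations the sender reveals), and let c be a real number (the receiver's response to silence). Suppose: (i) sender best response — every x ∈ [m, M] with x > c lies in R, and every x ∈ [m, M] with x < c does not lie in R; and (ii) receiver consistency — if P(X ∉ R) > 0 then c · P(X ∉ R) = E[X · 1_{X ∉ R}]. If moreover P(X ∉ R) > 0, then c = m, the event {X ∉ R} is almost surely contained in {X = m}, and every x ∈ (m, M] lies in R. -/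
open MeasureTheory

/-!
By the sender's best response no silent price exceeds `c`, while consistency says that the silent
prices average to `c`; hence they are almost surely all equal to `c`. A price strictly below `c`
would be kept silent, so almost no price lies below `c`. If silence has positive probability, the
price `c` is attained, and `c` is therefore the essential infimum of the prior.
-/

section

variable {Ω : Type*} [MeasurableSpace Ω] {μ : Measure Ω}

theorem ae_eq_of_ae_le_of_setIntegral_eq {f : Ω → ℝ} {s : Set Ω} {c : ℝ}
    (hs : μ s ≠ ⊤) (hf : IntegrableOn f s μ) (hle : ∀ᵐ ω ∂μ, ω ∈ s → f ω ≤ c)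
    (hc : c * μ.real s = ∫ ω in s, f ω ∂μ) :
    ∀ᵐ ω ∂μ, ω ∈ s → f ω = c := by
  have hle_restrict : ∀ᵐ ω ∂μ.restrict s, f ω ≤ c :=
    (ae_restrict_iff₀ (nullMeasurableSet_le hf.aemeasurable aemeasurable_const)).2 hle
  have hintegral : ∫ ω in s, f ω ∂μ = ∫ _ in s, c ∂μ := by
    rw [setIntegral_const, smul_eq_mul, mul_comm, hc]
  exact ae_imp_of_ae_restrict <|
    (integral_eq_iff_of_ae_le hf (integrableOn_const hs) hle_restrict).1 hintegral

/-- A pure-strategy perfect Bayesian equilibrium of the disclosure game with prior the law of `X`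
under `μ` and set of prices `D`: the sender reveals exactly the prices in `R` and the receiver
answers silence with `c`. Consistency is Bayes' rule multiplied by the probability of silence, so
that it constrains `c` only when silence has positive probability. -/
structure IsDisclosureEquilibrium (μ : Measure Ω) (X : Ω → ℝ) (D R : Set ℝ) (c : ℝ) : Prop where
  reveal : ∀ x ∈ D, c < x → x ∈ R
  quiet : ∀ x ∈ D, x < c → x ∉ R
  consistent : c * μ.real {ω | X ω ∉ R} = ∫ ω in {ω | X ω ∉ R}, X ω ∂μ

namespace IsDisclosureEquilibrium

variable [IsFiniteMeasure μ] {X : Ω → ℝ} {D R : Set ℝ} {c : ℝ}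

theorem ae_eq_of_notMem (h : IsDisclosureEquilibrium μ X D R c)
    (hX : IntegrableOn X {ω | X ω ∉ R} μ) (hD : ∀ᵐ ω ∂μ, X ω ∈ D) :
    ∀ᵐ ω ∂μ, X ω ∉ R → X ω = c := by
  refine ae_eq_of_ae_le_of_setIntegral_eq (measure_ne_top _ _) hX ?_ h.consistent
  filter_upwards [hD] with ω hω hsilent
  exact not_lt.1 fun hlt ↦ hsilent (h.reveal _ hω hlt)

theorem ae_le (h : IsDisclosureEquilibrium μ X D R c)
    (hX : IntegrableOn X {ω | X ω ∉ R} μ) (hD : ∀ᵐ ω ∂μ, X ω ∈ D) :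
    ∀ᵐ ω ∂μ, c ≤ X ω := by
  filter_upwards [hD, h.ae_eq_of_notMem hX hD] with ω hω hsilent
  exact not_lt.1 fun hlt ↦ hlt.ne (hsilent (h.quiet _ hω hlt))

theorem mem_of_measure_pos (h : IsDisclosureEquilibrium μ X D R c)
    (hX : IntegrableOn X {ω | X ω ∉ R} μ) (hD : ∀ᵐ ω ∂μ, X ω ∈ D)
    (hpos : 0 < μ {ω | X ω ∉ R}) : c ∈ D := by
  obtain ⟨ω, hsilent, hω, heq⟩ :=
    ((frequently_ae_iff.2 hpos.ne').and_eventually (hD.and (h.ae_eq_of_notMem hX hD))).exists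
  exact heq hsilent ▸ hω

end IsDisclosureEquilibrium

theorem unraveling_general [IsFiniteMeasure μ] {X : Ω → ℝ} {D R : Set ℝ} {c m : ℝ}
    (h : IsDisclosureEquilibrium μ X D R c) (hX : IntegrableOn X {ω | X ω ∉ R} μ)
    (hD : ∀ᵐ ω ∂μ, X ω ∈ D) (hm : m ∈ lowerBounds D) (hinf : ∀ a > m, 0 < μ {ω | X ω < a})
    (hpos : 0 < μ {ω | X ω ∉ R}) :
    c = m ∧ (∀ᵐ ω ∂μ, X ω ∉ R → X ω = m) ∧ ∀ x ∈ D, m < x → x ∈ R := by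
  have hle : c ≤ m := by
    refine not_lt.1 fun hlt ↦ (hinf c hlt).ne' ?_
    simpa only [ae_iff, not_le] using h.ae_le hX hD
  obtain rfl : c = m := hle.antisymm (hm (h.mem_of_measure_pos hX hD hpos))
  exact ⟨rfl, h.ae_eq_of_notMem hX hD, h.reveal⟩

end

/-- Unraveling direction of Theorem 1 (pure strategies): in any perfect Bayesian
equilibrium with reveal set `R` and silence response `c`, if silence has positive
probability then `c = m`, silence occurs (a.s.) only at the minimum price `m`,
and every price in `(m, M]` is revealed. -/
theorem unraveling {Ω : Type*} [MeasurableSpace Ω]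
    (μ : Measure Ω) [IsProbabilityMeasure μ]
    (X : Ω → ℝ) (hXmeas : Measurable X) (hXint : Integrable X μ)
    (m M : ℝ) (hbound : ∀ᵐ ω ∂μ, X ω ∈ Set.Icc m M)
    (hatom : 0 < μ {ω | X ω = m})
    (R : Set ℝ) (hR : MeasurableSet R) (c : ℝ)
    (hreveal : ∀ x ∈ Set.Icc m M, c < x → x ∈ R)
    (hquiet : ∀ x ∈ Set.Icc m M, x < c → x ∉ R)
    (hconsistent : 0 < μ {ω | X ω ∉ R} →
      c * (μ {ω | X ω ∉ R}).toReal = ∫ ω in {ω | X ω ∉ R}, X ω ∂μ)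
    (hpos : 0 < μ {ω | X ω ∉ R}) :
    c = m ∧ (∀ᵐ ω ∂μ, X ω ∉ R → X ω = m) ∧ ∀ x ∈ Set.Ioc m M, x ∈ R := by
  obtain ⟨hc, hsilent, hmem⟩ := unraveling_general ⟨hreveal, hquiet, hconsistent hpos⟩
    hXint.integrableOn hbound (fun _ hx ↦ hx.1)
    (fun a ha ↦ hatom.trans_le (measure_mono fun ω (hω : X ω = m) ↦ hω.trans_lt ha)) hpos
  exact ⟨hc, hsilent, fun x hx ↦ hmem x (Set.Ioc_subset_Icc_self hx) hx.1⟩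
end
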